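/- Let k ≥ 1, let g(k) = (k+1)(⌊k/2⌋+1) − 1, let D be a finite digraph, and let T be a (g(k)−1, g(k)−1)-linked set in D with |T| = 2g(k)−1. Then there exist in D a bramble B of order g(k), a directed path P whose vertex set is a hitting set of B, and a well-linked set A of order k with A ⊆ V(P). -/

import Mathlib

/-- A digraph on vertex type `V`, given by its adjacency relation
(loops are allowed; parallel edges are irrelevant here). -/
structure Dgraph (V : Type) where
  Adj : V → V → Prop

namespace Dgraph

variable {V : Type}

/-- There is a directed walk from `u` to `v` in `D` using only vertices of `S`. -/
def ReachIn (D : Dgraph V) (S : Set V) (u v : V) : Prop :=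
  u ∈ S ∧ v ∈ S ∧ Relation.ReflTransGen (fun a b => a ∈ S ∧ b ∈ S ∧ D.Adj a b) u v

/-- The subdigraph of `D` induced on `S` is strongly connected. -/
def StronglyConnectedOn (D : Dgraph V) (S : Set V) : Prop :=
  ∀ u ∈ S, ∀ v ∈ S, D.ReachIn S u v

/-- `C` is the vertex set of a strong component of the subdigraph of `D` induced on `A`,
i.e. a maximal subset of `A` inducing a strongly connected subdigraph. -/
def IsStrongComponentOn (D : Dgraph V) (A C : Set V) : Prop :=
  C ⊆ A ∧ D.StronglyConnectedOn C ∧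
    ∀ C' : Set V, C ⊆ C' → C' ⊆ A → D.StronglyConnectedOn C' → C' = C

/-- `Z` is a `(T, r)`-balanced separator of `D`: every strong component of `D \ Z`
contains at most `r` vertices of `T`. -/
def IsBalancedSeparator (D : Dgraph V) (T : Set V) (r : ℕ) (Z : Set V) : Prop :=
  ∀ C : Set V, D.IsStrongComponentOn Zᶜ C → (C ∩ T).ncard ≤ r

/-- `T` is `(k, r)`-linked in `D`: every `(T, r)`-balanced separator has size at least `k + 1`. -/
def IsLinked (D : Dgraph V) (T : Set V) (k r : ℕ) : Prop :=
  ∀ Z : Set V, D.IsBalancedSeparator T r Z → k + 1 ≤ Z.ncard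

/-- `β` is a haven of order `k` in `D`: it assigns to every `Z` with `|Z| ≤ k - 1`
the vertex set of a strong component of `D \ Z`, monotonically. -/
def IsHaven (D : Dgraph V) (k : ℕ) (β : Set V → Set V) : Prop :=
  (∀ Z : Set V, Z.ncard < k → D.IsStrongComponentOn Zᶜ (β Z)) ∧
  (∀ Z Z' : Set V, Z.ncard < k → Z' ⊆ Z → β Z ⊆ β Z')

/-- A bramble in `D`: a family of (vertex sets of) strongly connected subdigraphs
any two of which touch. -/
def IsBramble (D : Dgraph V) (ℬ : Set (Set V)) : Prop :=
  (∀ B ∈ ℬ, D.StronglyConnectedOn B) ∧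
  ∀ B ∈ ℬ, ∀ B' ∈ ℬ,
    (B ∩ B').Nonempty ∨
      ((∃ u ∈ B, ∃ v ∈ B', D.Adj u v) ∧ (∃ u ∈ B', ∃ v ∈ B, D.Adj u v))

/-- `C` is a hitting set of the family `ℬ`. -/
def IsHittingSet (ℬ : Set (Set V)) (C : Set V) : Prop :=
  ∀ B ∈ ℬ, (C ∩ B).Nonempty

/-- The order of a bramble: the minimum size of a hitting set. -/
noncomputable def brambleOrder (ℬ : Set (Set V)) : ℕ :=
  sInf {n : ℕ | ∃ C : Set V, IsHittingSet ℬ C ∧ C.ncard = n}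

/-- The `T`-bramble with threshold `g`: all induced strongly connected subdigraphs
containing at least `g` vertices of `T`. -/
def TBramble (D : Dgraph V) (T : Set V) (g : ℕ) : Set (Set V) :=
  {B : Set V | D.StronglyConnectedOn B ∧ g ≤ (B ∩ T).ncard}

/-- The restricted bramble `ℬ(X)`: elements of `ℬ` intersecting `X`. -/
def restrictedBramble (ℬ : Set (Set V)) (X : Set V) : Set (Set V) :=
  {B ∈ ℬ | (B ∩ X).Nonempty}

/-- The complement bramble `ℬ̄(X)`: elements of `ℬ` disjoint from `X`. -/
def complementBramble (ℬ : Set (Set V)) (X : Set V) : Set (Set V) :=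
  {B ∈ ℬ | B ∩ X = ∅}

/-- A directed path in `D`, as a duplicate-free list of consecutively adjacent vertices. -/
def IsPath (D : Dgraph V) (P : List V) : Prop :=
  P.Nodup ∧ P.Chain' D.Adj

/-- A directed path in `D` starting in `A` and ending in `B`. -/
def IsPathFromTo (D : Dgraph V) (P : List V) (A B : Set V) : Prop :=
  D.IsPath P ∧ ∃ h : P ≠ [], P.head h ∈ A ∧ P.getLast h ∈ B

/-- There are `n` pairwise vertex-disjoint directed paths from `A` to `B` in `D`. -/
def HasDisjointPaths (D : Dgraph V) (A B : Set V) (n : ℕ) : Prop :=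
  ∃ Ps : Fin n → List V, (∀ i, D.IsPathFromTo (Ps i) A B) ∧
    ∀ i j, i ≠ j → ∀ v, v ∈ Ps i → v ∉ Ps j

/-- `A` is well-linked in `D`. -/
def WellLinked (D : Dgraph V) (A : Set V) : Prop :=
  ∀ X Y : Set V, X ⊆ A → Y ⊆ A → Disjoint X Y → X.ncard = Y.ncard →
    D.HasDisjointPaths X Y X.ncard

end Dgraph

/-- `g(k) = (k+1)(⌊k/2⌋+1) - 1`. -/
def gfun (k : ℕ) : ℕ := (k + 1) * (k / 2 + 1) - 1

/-!
The bramble `ℬ` consists of the strongly connected sets containing at least `g(k)` vertices of `T`;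
since `|T| < 2g(k)`, any two of them intersect in `T`. A path that hits all of `ℬ` is grown
greedily, always entering a set that has been missed so far.

For `h = ⌊k/2⌋`, the order of the elements of `ℬ` meeting an initial segment of this path grows by
at most one with every vertex. As the total order is at least `(k+1)(h+1) - 1`, the path can be cut
at `k` vertices so that each of the `k + 1` remaining segments still meets a part of `ℬ` of order
at least `h`. These `k` vertices are well-linked: for disjoint `X` and `Y` of equal size `n ≤ h`
among them, a set of fewer than `n` vertices avoids some `x ∈ X` with the segment after it, some
`y ∈ Y` with the segment before it, and elements of `ℬ` meeting these two segments. So it does not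
separate `X` from `Y`, and Menger's theorem provides the paths.
-/

namespace Dgraph

variable {V : Type} {D : Dgraph V}

section Reachability

variable {S S' : Set V} {u v w : V}

theorem ReachIn.refl (hu : u ∈ S) : D.ReachIn S u u :=
  ⟨hu, hu, .refl⟩

theorem ReachIn.of_adj (hu : u ∈ S) (hv : v ∈ S) (huv : D.Adj u v) : D.ReachIn S u v :=
  ⟨hu, hv, .single ⟨hu, hv, huv⟩⟩

theorem ReachIn.trans (huv : D.ReachIn S u v) (hvw : D.ReachIn S v w) : D.ReachIn S u w :=
  ⟨huv.1, hvw.2.1, huv.2.2.trans hvw.2.2⟩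

theorem ReachIn.mono (hS : S ⊆ S') (huv : D.ReachIn S u v) : D.ReachIn S' u v :=
  ⟨hS huv.1, hS huv.2.1,
    Relation.ReflTransGen.mono (fun _ _ h => ⟨hS h.1, hS h.2.1, h.2.2⟩) _ _ huv.2.2⟩

theorem ReachIn.mem_of_forall_adj {W : Set V} (huv : D.ReachIn S u v) (hu : u ∈ W)
    (hW : ∀ a ∈ W, ∀ b ∈ S, D.Adj a b → b ∈ W) : v ∈ W := by
  obtain ⟨-, -, h⟩ := huv
  induction h with
  | refl => exact hu
  | tail _ hbc ih => exact hW _ ih _ hbc.2.1 hbc.2.2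

theorem reachIn_of_isChain_cons {l : List V} (hl : (u :: l).IsChain D.Adj) (hv : v ∈ u :: l) :
    D.ReachIn {w | w ∈ u :: l} u v := by
  induction l generalizing u with
  | nil =>
    obtain rfl := List.mem_singleton.1 hv
    exact .refl (List.mem_singleton_self v)
  | cons a l ih =>
    obtain ⟨hua, hl⟩ := List.isChain_cons_cons.1 hl
    rcases List.mem_cons.1 hv with rfl | hv
    · exact .refl List.mem_cons_self
    · exact (ReachIn.of_adj (by simp) (by simp) hua).trans
        ((ih hl hv).mono fun _ => List.mem_cons_of_mem u)

theorem reachIn_of_isChain_concat {l : List V} (hl : (l ++ [v]).IsChain D.Adj)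
    (hu : u ∈ l ++ [v]) : D.ReachIn {w | w ∈ l ++ [v]} u v := by
  obtain ⟨s, t, hst⟩ := List.append_of_mem hu
  have hv : v ∈ u :: t := by
    have hlast := congrArg List.getLast? hst
    rw [List.getLast?_concat, List.getLast?_append_cons] at hlast
    exact List.mem_of_getLast? hlast.symm
  rw [hst] at hl ⊢
  exact (reachIn_of_isChain_cons hl.right_of_append hv).mono fun _ => List.mem_append_right s

theorem ReachIn.exists_isPathFromTo (huv : D.ReachIn S u v) :
    ∃ P, D.IsPathFromTo P {u} {v} ∧ {w | w ∈ P} ⊆ S := by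
  obtain ⟨-, hv, h⟩ := huv
  induction h using Relation.ReflTransGen.head_induction_on with
  | refl => exact ⟨[v], ⟨⟨by simp, .singleton v⟩, by simp⟩, by simpa using hv⟩
  | @head a b h _ ih =>
    obtain ⟨ha, -, hab⟩ := h
    obtain ⟨P, ⟨⟨hnodup, hchain⟩, hne, hhead, hlast⟩, hPS⟩ := ih
    obtain ⟨l, rfl⟩ : ∃ l, P = b :: l := ⟨P.tail, by rw [← hhead, List.cons_head_tail]⟩
    by_cases haP : a ∈ b :: l
    -- Skip the closed walk that leaves `a` and comes back to it.
    · obtain ⟨s, t, hst⟩ := List.append_of_mem haP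
      simp only [hst, List.getLast_append_of_ne_nil _ (List.cons_ne_nil a t)] at hlast
      rw [hst] at hnodup hchain
      refine ⟨a :: t, ⟨⟨hnodup.of_append_right, hchain.right_of_append⟩, by simp, rfl, hlast⟩, ?_⟩
      exact fun w hw => hPS (hst ▸ List.mem_append_right s hw)
    · refine ⟨a :: b :: l, ⟨⟨hnodup.cons haP, hchain.cons_cons hab⟩, by simp, rfl, ?_⟩, ?_⟩
      · rwa [List.getLast_cons hne]
      · exact fun w hw => (List.mem_cons.1 hw).elim (· ▸ ha) (hPS ·)

end Reachability

section Menger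

variable {X Y : Set V}

theorem eq_and_eq_of_iterate_eq_iterate {f : V → V} (hinj : Yᶜ.InjOn f)
    (hmaps : Yᶜ.MapsTo f Xᶜ) {x y : V} (hx : x ∈ X) (hy : y ∈ X) {i j : ℕ}
    (hi : ∀ m < i, f^[m] x ∉ Y) (hj : ∀ m < j, f^[m] y ∉ Y) (hxy : f^[i] x = f^[j] y) :
    x = y ∧ i = j := by
  induction i generalizing j with
  | zero =>
    cases j with
    | zero => exact ⟨hxy, rfl⟩
    | succ j =>
      rw [Function.iterate_succ_apply', Function.iterate_zero_apply] at hxy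
      exact absurd (hxy ▸ hx) (hmaps (hj j j.lt_succ_self))
  | succ i ih =>
    rw [Function.iterate_succ_apply'] at hxy
    cases j with
    | zero => exact absurd (hxy ▸ hy) (hmaps (hi i i.lt_succ_self))
    | succ j =>
      rw [Function.iterate_succ_apply'] at hxy
      obtain ⟨hxy, hij⟩ := ih (fun m hm => hi m (by omega)) (fun m hm => hj m (by omega))
        (hinj (hi i i.lt_succ_self) (hj j j.lt_succ_self) hxy)
      exact ⟨hxy, congrArg Nat.succ hij⟩

theorem exists_iterate_mem_of_mapsTo_compl [Finite V] {f : V → V} (hinj : Yᶜ.InjOn f)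
    (hmaps : Yᶜ.MapsTo f Xᶜ) {x : V} (hx : x ∈ X) : ∃ n, f^[n] x ∈ Y := by
  by_contra! hY
  exact not_injective_infinite_finite (fun n => f^[n] x) fun i j hij =>
    (eq_and_eq_of_iterate_eq_iterate hinj hmaps hx hx (fun m _ => hY m) (fun m _ => hY m) hij).2

theorem getLast_iterate_succ {α : Type*} (f : α → α) (a : α) (n : ℕ)
    (hne : List.iterate f a (n + 1) ≠ []) : (List.iterate f a (n + 1)).getLast hne = f^[n] a := by
  simp only [List.getLast_eq_getElem, List.getElem_iterate, List.length_iterate,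
    Nat.add_sub_cancel]

theorem hasDisjointPaths_of_injOn [Finite V] {f : V → V} (hinj : Yᶜ.InjOn f)
    (hmaps : Yᶜ.MapsTo f Xᶜ) (hadj : ∀ u ∉ Y, u = f u ∨ D.Adj u (f u)) :
    D.HasDisjointPaths X Y X.ncard := by
  classical
  have hex (x : X) : ∃ n, f^[n] x ∈ Y := exists_iterate_mem_of_mapsTo_compl hinj hmaps x.2
  let N (x : X) : ℕ := Nat.find (hex x)
  have hN (x : X) : f^[N x] x ∈ Y := Nat.find_spec (hex x)
  have hlt (x : X) (m : ℕ) (hm : m < N x) : f^[m] x ∉ Y := Nat.find_min (hex x) hm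
  have hinj_iterate (x y : X) (i j : ℕ) (hi : i ≤ N x) (hj : j ≤ N y)
      (hxy : f^[i] x = f^[j] y) : x = y ∧ i = j := by
    rw [Subtype.ext_iff]
    exact eq_and_eq_of_iterate_eq_iterate hinj hmaps x.2 y.2
      (fun m hm => hlt x m (by omega)) (fun m hm => hlt y m (by omega)) hxy
  let e : Fin X.ncard ≃ X := (Finite.equivFinOfCardEq rfl).symm
  refine ⟨fun i => List.iterate f (e i) (N (e i) + 1),
    fun i => ⟨⟨?_, ?_⟩, List.cons_ne_nil _ _, ?_, ?_⟩, ?_⟩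
  · refine List.nodup_iff_injective_get.2 fun a b hab => Fin.ext ?_
    have := a.2
    have := b.2
    simp only [List.length_iterate, List.get_eq_getElem, List.getElem_iterate] at *
    exact (hinj_iterate _ _ a b (by omega) (by omega) hab).2
  · refine List.isChain_iff_getElem.2 fun a ha => ?_
    rw [List.length_iterate] at ha
    rw [List.getElem_iterate, List.getElem_iterate, Function.iterate_succ_apply']
    refine (hadj _ (hlt _ a (by omega))).resolve_left fun hfix => ?_
    rw [← Function.iterate_succ_apply' f] at hfix
    have := (hinj_iterate _ _ a (a + 1) (by omega) (by omega) hfix).2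
    omega
  · exact (e i).2
  · exact Set.mem_of_eq_of_mem (getLast_iterate_succ ..) (hN (e i))
  · intro i j hij v hvi hvj
    obtain ⟨a, ha, rfl⟩ := List.mem_iterate.1 hvi
    obtain ⟨b, hb, hab⟩ := List.mem_iterate.1 hvj
    exact hij (e.injective (hinj_iterate _ _ a b (by omega) (by omega) hab).1)

/-- The closed out-neighbourhood `N⁺[W]` of a vertex set `W`. Menger's theorem for paths from `X`
to `Y` is Hall's theorem for the sets `N⁺[{u}] \ X` with `u ∉ Y`. -/
def closedOutNbhd (D : Dgraph V) (W : Set V) : Set V :=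
  {v | ∃ u ∈ W, u = v ∨ D.Adj u v}

theorem ncard_le_ncard_closedOutNbhd_sdiff [Finite V]
    (hconn : ∀ S : Set V, S.ncard < X.ncard → ∃ x ∈ X, ∃ y ∈ Y, D.ReachIn Sᶜ x y)
    {W : Set V} (hWY : Disjoint W Y) : W.ncard ≤ (D.closedOutNbhd W \ X).ncard := by
  by_contra! hlt
  -- The vertices of `X ∪ N⁺[W]` outside `W` would separate `X` from `Y`.
  let S := (X ∪ D.closedOutNbhd W) \ W
  have hWsub : W ⊆ X ∪ D.closedOutNbhd W := fun w hw => Or.inr ⟨w, hw, Or.inl rfl⟩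
  have hS : S.ncard + W.ncard = X.ncard + (D.closedOutNbhd W \ X).ncard := by
    rw [Set.ncard_sdiff_add_ncard_of_subset hWsub, ← Set.union_sdiff_self,
      Set.ncard_union_eq Set.disjoint_sdiff_right]
  obtain ⟨x, hx, y, hy, hxy⟩ := hconn S (by omega)
  have hxW : x ∈ W := by_contra fun hxW => hxy.1 ⟨Or.inl hx, hxW⟩
  refine hWY.notMem_of_mem_left (hxy.mem_of_forall_adj hxW fun a ha b hb hab => ?_) hy
  exact by_contra fun hbW => hb ⟨Or.inr ⟨a, ha, Or.inr hab⟩, hbW⟩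

theorem hasDisjointPaths_of_forall_reachIn_compl [Finite V]
    (hconn : ∀ S : Set V, S.ncard < X.ncard → ∃ x ∈ X, ∃ y ∈ Y, D.ReachIn Sᶜ x y) :
    D.HasDisjointPaths X Y X.ncard := by
  classical
  have := Fintype.ofFinite V
  let r (u : ↥Yᶜ) (v : V) : Prop := (u.1 = v ∨ D.Adj u v) ∧ v ∉ X
  have hall (s : Finset ↥Yᶜ) : s.card ≤ (Finset.univ.filter fun v => ∃ u ∈ s, r u v).card := by
    have hW : Disjoint (s.map (Function.Embedding.subtype _) : Set V) Y :=
      Set.disjoint_left.2 fun v hv => by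
        obtain ⟨u, -, rfl⟩ := Finset.mem_map.1 hv
        exact u.2
    have hcard := ncard_le_ncard_closedOutNbhd_sdiff hconn hW
    rw [Set.ncard_coe_finset, Finset.card_map] at hcard
    refine hcard.trans_eq ?_
    rw [← Set.ncard_coe_finset]
    congr 1
    ext v
    simp only [closedOutNbhd, r]
    aesop
  -- A transversal sends every `u ∉ Y` to its successor on a path, or to itself if unused.
  obtain ⟨f, hfinj, hf⟩ := (Fintype.all_card_le_filter_rel_iff_exists_injective r).1 hall
  let f' : V → V := Function.extend Subtype.val f id
  have hf' (u : ↥Yᶜ) : f' u = f u := Subtype.val_injective.extend_apply f id u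
  refine hasDisjointPaths_of_injOn (f := f') ?_ ?_ ?_
  · intro u hu v hv huv
    exact congrArg Subtype.val (hfinj ((hf' ⟨u, hu⟩).symm.trans (huv.trans (hf' ⟨v, hv⟩))))
  · intro u hu
    exact hf' ⟨u, hu⟩ ▸ (hf ⟨u, hu⟩).2
  · intro u hu
    exact hf' ⟨u, hu⟩ ▸ (hf ⟨u, hu⟩).1

end Menger

section Order

variable {ℬ : Set (Set V)} {X Y : Set V}

theorem brambleOrder_le_ncard {C : Set V} (hC : IsHittingSet ℬ C) : brambleOrder ℬ ≤ C.ncard :=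
  Nat.sInf_le ⟨C, hC, rfl⟩

-- A family containing `∅` has no hitting set, and its `brambleOrder` is the junk value `0`.
theorem exists_isHittingSet_ncard_eq (hℬ : ∅ ∉ ℬ) :
    ∃ C, IsHittingSet ℬ C ∧ C.ncard = brambleOrder ℬ := by
  have huniv : IsHittingSet ℬ Set.univ := fun B hB => by
    rw [Set.univ_inter, Set.nonempty_iff_ne_empty]
    exact fun h => hℬ (h ▸ hB)
  have hne : {n | ∃ C, IsHittingSet ℬ C ∧ C.ncard = n}.Nonempty := ⟨_, Set.univ, huniv, rfl⟩
  exact Nat.sInf_mem hne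

theorem exists_isHittingSet_restrictedBramble (ℬ : Set (Set V)) (X : Set V) :
    ∃ C, IsHittingSet (restrictedBramble ℬ X) C ∧
      C.ncard = brambleOrder (restrictedBramble ℬ X) :=
  exists_isHittingSet_ncard_eq fun h => h.2.ne_empty (Set.empty_inter X)

theorem IsHittingSet.restrictedBramble_eq (hX : IsHittingSet ℬ X) : restrictedBramble ℬ X = ℬ :=
  Set.sep_eq_self_iff_mem_true.2 fun B hB => Set.inter_comm X B ▸ hX B hB

theorem brambleOrder_restrictedBramble_mono (hXY : X ⊆ Y) :
    brambleOrder (restrictedBramble ℬ X) ≤ brambleOrder (restrictedBramble ℬ Y) := by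
  obtain ⟨C, hC, hCcard⟩ := exists_isHittingSet_restrictedBramble ℬ Y
  rw [← hCcard]
  exact brambleOrder_le_ncard fun B hB =>
    hC B ⟨hB.1, hB.2.mono (Set.inter_subset_inter_right B hXY)⟩

theorem brambleOrder_restrictedBramble_union_le (ℬ : Set (Set V)) (X Y : Set V) :
    brambleOrder (restrictedBramble ℬ (X ∪ Y)) ≤
      brambleOrder (restrictedBramble ℬ X) + brambleOrder (restrictedBramble ℬ Y) := by
  obtain ⟨C, hC, hCcard⟩ := exists_isHittingSet_restrictedBramble ℬ X
  obtain ⟨C', hC', hCcard'⟩ := exists_isHittingSet_restrictedBramble ℬ Y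
  rw [← hCcard, ← hCcard']
  refine (brambleOrder_le_ncard fun B hB => ?_).trans (Set.ncard_union_le C C')
  rw [Set.union_inter_distrib_right, Set.union_nonempty]
  have hBXY := hB.2
  rw [Set.inter_union_distrib_left, Set.union_nonempty] at hBXY
  exact hBXY.imp (hC B ⟨hB.1, ·⟩) (hC' B ⟨hB.1, ·⟩)

theorem brambleOrder_restrictedBramble_le_ncard (ℬ : Set (Set V)) (X : Set V) :
    brambleOrder (restrictedBramble ℬ X) ≤ X.ncard :=
  brambleOrder_le_ncard fun B hB => Set.inter_comm B X ▸ hB.2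

theorem exists_mem_restrictedBramble_disjoint {S : Set V}
    (hS : S.ncard < brambleOrder (restrictedBramble ℬ X)) :
    ∃ B ∈ restrictedBramble ℬ X, Disjoint S B := by
  by_contra! h
  exact (brambleOrder_le_ncard fun B hB => Set.not_disjoint_iff_nonempty_inter.1 (h B hB)).not_gt hS

theorem IsBramble.reachIn_union (hℬ : D.IsBramble ℬ) {B B' : Set V} (hB : B ∈ ℬ) (hB' : B' ∈ ℬ)
    {u v : V} (hu : u ∈ B) (hv : v ∈ B') : D.ReachIn (B ∪ B') u v := by
  have hleft {x : V} (hx : x ∈ B) : D.ReachIn (B ∪ B') u x :=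
    (hℬ.1 B hB u hu x hx).mono Set.subset_union_left
  have hright {x : V} (hx : x ∈ B') : D.ReachIn (B ∪ B') x v :=
    (hℬ.1 B' hB' x hx v hv).mono Set.subset_union_right
  rcases hℬ.2 B hB B' hB' with ⟨x, hx, hx'⟩ | ⟨⟨x, hx, y, hy, hxy⟩, -⟩
  · exact (hleft hx).trans (hright hx')
  · have hxy := ReachIn.of_adj (Set.mem_union_left B' hx) (Set.mem_union_right B hy) hxy
    exact (hleft hx).trans (hxy.trans (hright hy))

end Order

section HittingPath

/-- `P ++ [w]` is a directed path that meets `B` in its last vertex `w` and nowhere else. Growing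
such paths from one bramble element to the next yields a path that hits the whole bramble. -/
structure IsEntryPath (D : Dgraph V) (B : Set V) (P : List V) (w : V) : Prop where
  isPath : D.IsPath (P ++ [w])
  mem : w ∈ B
  notMem : ∀ x ∈ P, x ∉ B

theorem IsPathFromTo.exists_isEntryPath {A B : Set V} {R : List V} (hR : D.IsPathFromTo R A B) :
    ∃ P w, D.IsEntryPath B P w ∧ P ++ [w] <+: R := by
  classical
  obtain ⟨⟨hnodup, hchain⟩, hne, -, hlast⟩ := hR
  obtain ⟨w, hw⟩ : ∃ w, R.find? (· ∈ B) = some w :=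
    Option.isSome_iff_exists.1 (List.find?_isSome.2 ⟨_, R.getLast_mem hne, by simpa using hlast⟩)
  obtain ⟨hwB, P, Q, rfl, hP⟩ := List.find?_eq_some_iff_append.1 hw
  have hprefix : P ++ [w] <+: P ++ w :: Q := ⟨Q, by simp⟩
  exact ⟨P, w, ⟨⟨hnodup.sublist hprefix.sublist, hchain.prefix hprefix⟩, by simpa using hwB,
    by simpa using hP⟩, hprefix⟩

variable {ℬ : Set (Set V)}

theorem IsBramble.exists_isEntryPath_length_lt (hℬ : D.IsBramble ℬ) {B B' : Set V} (hB : B ∈ ℬ)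
    (hB' : B' ∈ ℬ) (hne : B'.Nonempty) {P : List V} {w : V} (hP : D.IsEntryPath B P w)
    (hmiss : ∀ x ∈ P ++ [w], x ∉ B') :
    ∃ Q v, D.IsEntryPath B' Q v ∧ P.length < Q.length := by
  obtain ⟨v₀, hv₀⟩ := hne
  obtain ⟨R, ⟨hRpath, hRne, hRhead, hRlast⟩, hRsub⟩ :=
    (hℬ.reachIn_union hB hB' hP.mem hv₀).exists_isPathFromTo
  have hR : D.IsPathFromTo R {w} B' := ⟨hRpath, hRne, hRhead, hRlast ▸ hv₀⟩
  obtain ⟨Q, v, hQ, hQR⟩ := hR.exists_isEntryPath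
  have hwB' : w ∉ B' := hmiss w (List.mem_concat_self ..)
  obtain ⟨Q, rfl⟩ : ∃ Q', Q = w :: Q' := by
    have hhead : (Q ++ [v]).head (by simp) = w := (hQR.head _).trans hRhead
    cases Q with
    | nil =>
      obtain rfl : v = w := hhead
      exact absurd hQ.mem hwB'
    | cons a Q => exact ⟨Q, congrArg (· :: Q) hhead⟩
  have hdisj (x : V) (hxP : x ∈ P) : x ∉ w :: Q ++ [v] := by
    intro hxQ
    rcases hRsub (hQR.subset hxQ) with hxB | hxB'
    · exact hP.notMem x hxP hxB
    · exact hmiss x (List.mem_append_left _ hxP) hxB'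
  refine ⟨P ++ w :: Q, v, ⟨⟨?_, ?_⟩, hQ.mem, ?_⟩, by simp⟩
  · rw [List.append_assoc]
    exact hP.isPath.1.of_append_left.append hQ.isPath.1 hdisj
  · have happend : P ++ [w] ++ (Q ++ [v]) = P ++ w :: Q ++ [v] := by simp
    exact happend ▸ hP.isPath.2.append_overlap hQ.isPath.2 (List.cons_ne_nil w [])
  · intro x hx
    rcases List.mem_append.1 hx with hx | hx
    · exact hmiss x (List.mem_append_left _ hx)
    · exact hQ.notMem x hx

theorem IsBramble.exists_isPath_isHittingSet [Finite V] (hℬ : D.IsBramble ℬ) (hempty : ∅ ∉ ℬ) :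
    ∃ P, D.IsPath P ∧ IsHittingSet ℬ {v | v ∈ P} := by
  have := Fintype.ofFinite V
  have hne {B : Set V} (hB : B ∈ ℬ) : B.Nonempty :=
    Set.nonempty_iff_ne_empty.2 fun h => hempty (h ▸ hB)
  rcases ℬ.eq_empty_or_nonempty with rfl | ⟨B₀, hB₀⟩
  · exact ⟨[], ⟨.nil, .nil⟩, fun B hB => hB.elim⟩
  by_contra! hnot
  have hlong (n : ℕ) : ∃ B ∈ ℬ, ∃ P w, D.IsEntryPath B P w ∧ n ≤ P.length := by
    induction n with
    | zero =>
      obtain ⟨w, hw⟩ := hne hB₀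
      exact ⟨B₀, hB₀, [], w, ⟨⟨by simp, .singleton w⟩, hw, by simp⟩, Nat.zero_le _⟩
    | succ n ih =>
      obtain ⟨B, hB, P, w, hP, hn⟩ := ih
      obtain ⟨B', hB', hmiss⟩ : ∃ B' ∈ ℬ, ¬({v | v ∈ P ++ [w]} ∩ B').Nonempty := by
        simpa [IsHittingSet] using hnot _ hP.isPath
      obtain ⟨Q, v, hQ, hlt⟩ := hℬ.exists_isEntryPath_length_lt hB hB' (hne hB') hP
        fun x hx hxB' => hmiss ⟨x, hx, hxB'⟩
      exact ⟨B', hB', Q, v, hQ, hn.trans_lt hlt⟩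
  obtain ⟨B, -, P, w, hP, hlen⟩ := hlong (Fintype.card V)
  have := hP.isPath.1.length_le_card
  rw [List.length_append, List.length_singleton] at this
  omega

end HittingPath

section Cuts

variable {good : List V → Prop} {P A : List V}

/-- Deleting the vertices `A` from the list `P` leaves `A.length + 1` consecutive segments, each of
which is `good`. The vertices of `A` will be the well-linked set, and the segments on their two
sides provide many ways into and out of each of them. -/
inductive CutsInto (good : List V → Prop) : List V → List V → Prop
  | last {C : List V} : good C → CutsInto good C []
  | cut {C P A : List V} {a : V} :
      good C → CutsInto good P A → CutsInto good (C ++ a :: P) (a :: A)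

theorem CutsInto.sublist (h : CutsInto good P A) : A.Sublist P := by
  induction h with
  | last _ => exact List.nil_sublist _
  | cut _ _ ih => exact (ih.cons_cons _).trans (List.sublist_append_right _ _)

theorem CutsInto.append {Q A' : List V} {a : V} (hP : CutsInto good P A)
    (hQ : CutsInto good Q A') : CutsInto good (P ++ a :: Q) (A ++ a :: A') := by
  induction hP with
  | last hC => exact .cut hC hQ
  | cut hC _ ih => exact List.append_assoc .. ▸ .cut hC ih

theorem CutsInto.reverse (h : CutsInto good P A) :
    CutsInto (fun C => good C.reverse) P.reverse A.reverse := by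
  induction h with
  | last hC => exact .last (by rwa [List.reverse_reverse])
  | @cut C P A a hC _ ih =>
    rw [List.reverse_append, List.reverse_cons, List.reverse_cons, List.append_assoc,
      List.singleton_append]
    exact ih.append (.last (by rwa [List.reverse_reverse]))

theorem exists_append_cons_brambleOrder_eq {ℬ : Set (Set V)} {h : ℕ}
    (hP : h < brambleOrder (restrictedBramble ℬ {v | v ∈ P})) :
    ∃ C a Q, P = C ++ a :: Q ∧ brambleOrder (restrictedBramble ℬ {v | v ∈ C}) = h := by
  induction P using List.reverseRecOn with
  | nil =>
    have := hP.trans_le (brambleOrder_restrictedBramble_le_ncard ℬ _)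
    simp at this
  | append_singleton P a ih =>
    rcases lt_or_ge h (brambleOrder (restrictedBramble ℬ {v | v ∈ P})) with hlt | hle
    · obtain ⟨C, b, Q, rfl, hC⟩ := ih hlt
      exact ⟨C, b, Q ++ [a], by simp, hC⟩
    · have hunion : {v | v ∈ P ++ [a]} = {v | v ∈ P} ∪ {a} := by
        ext v
        simp [or_comm]
      have hstep := brambleOrder_restrictedBramble_union_le ℬ {v | v ∈ P} {a}
      have hsingle := brambleOrder_restrictedBramble_le_ncard ℬ {a}
      rw [← hunion] at hstep
      rw [Set.ncard_singleton] at hsingle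
      exact ⟨P, a, [], rfl, by omega⟩

theorem exists_cutsInto {ℬ : Set (Set V)} {h m : ℕ}
    (hP : (m + 1) * (h + 1) ≤ brambleOrder (restrictedBramble ℬ {v | v ∈ P}) + 1) :
    ∃ A, A.length = m ∧
      CutsInto (fun C => h ≤ brambleOrder (restrictedBramble ℬ {v | v ∈ C})) P A := by
  induction m generalizing P with
  | zero => exact ⟨[], rfl, .last (by omega)⟩
  | succ m ih =>
    rw [Nat.succ_mul] at hP
    have hpos : 0 < (m + 1) * (h + 1) := by positivity
    obtain ⟨C, a, Q, rfl, hC⟩ :=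
      exists_append_cons_brambleOrder_eq (ℬ := ℬ) (P := P) (h := h) (by omega)
    have hunion : {v | v ∈ C ++ a :: Q} = {v | v ∈ C} ∪ ({a} ∪ {v | v ∈ Q}) := by
      ext v
      simp [or_left_comm]
    have hCQ := brambleOrder_restrictedBramble_union_le ℬ {v | v ∈ C} ({a} ∪ {v | v ∈ Q})
    have haQ := brambleOrder_restrictedBramble_union_le ℬ {a} {v | v ∈ Q}
    have ha := brambleOrder_restrictedBramble_le_ncard ℬ {a}
    rw [← hunion] at hCQ
    rw [Set.ncard_singleton] at ha
    obtain ⟨A, hA, hcut⟩ := ih (P := Q) (by omega)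
    exact ⟨a :: A, by rw [List.length_cons, hA], .cut hC.ge hcut⟩

theorem CutsInto.exists_preceding (h : CutsInto good P A) (hP : P.Nodup) :
    ∃ F : V → List V, {a | a ∈ A}.PairwiseDisjoint (fun a => {v | v ∈ F a ++ [a]}) ∧
      ∀ a ∈ A, good (F a) ∧ F a ++ [a] <:+: P := by
  classical
  induction h with
  | last _ => exact ⟨fun _ => [], by simp, by simp⟩
  | @cut C P A a hC hcut ih =>
    have happend : C ++ a :: P = C ++ [a] ++ P := by simp
    rw [happend] at hP ⊢
    obtain ⟨F, hF, hgood⟩ := ih hP.of_append_right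
    have ha : a ∉ A := fun haA =>
      List.disjoint_of_nodup_append hP (List.mem_concat_self ..) (hcut.sublist.subset haA)
    have hne (b : V) (hb : b ∈ A) : b ≠ a := ne_of_mem_of_not_mem hb ha
    refine ⟨Function.update F a C, ?_, ?_⟩
    · have hset : {b | b ∈ a :: A} = insert a {b | b ∈ A} := by ext; simp
      rw [hset, Set.pairwiseDisjoint_insert_of_notMem (by exact ha)]
      refine ⟨fun b hb c hc hbc => ?_, fun b hb => ?_⟩
      · simpa only [Function.onFun, Function.update_of_ne (hne b hb),
          Function.update_of_ne (hne c hc)] using hF hb hc hbc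
      · simp only [Function.update_self, Function.update_of_ne (hne b hb)]
        exact Set.disjoint_left.2 fun v hvC hvb =>
          List.disjoint_of_nodup_append hP hvC ((hgood b hb).2.subset hvb)
    · intro b hb
      rcases List.mem_cons.1 hb with rfl | hb
      · simpa only [Function.update_self] using ⟨hC, (List.prefix_append _ _).isInfix⟩
      · rw [Function.update_of_ne (hne b hb)]
        exact ⟨(hgood b hb).1, (hgood b hb).2.trans (List.suffix_append _ _).isInfix⟩

theorem CutsInto.exists_following (h : CutsInto good P A) (hP : P.Nodup) :
    ∃ F : V → List V, {a | a ∈ A}.PairwiseDisjoint (fun a => {v | v ∈ a :: F a}) ∧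
      ∀ a ∈ A, good (F a) ∧ a :: F a <:+: P := by
  obtain ⟨F, hF, hgood⟩ := h.reverse.exists_preceding (List.nodup_reverse.2 hP)
  have hrev (a : V) : a :: (F a).reverse = (F a ++ [a]).reverse := by simp
  simp only [List.mem_reverse] at hF hgood
  refine ⟨fun a => (F a).reverse, ?_, fun a ha => ⟨(hgood a ha).1, ?_⟩⟩
  · simpa only [hrev, List.mem_reverse] using hF
  · rw [hrev, ← List.reverse_infix, List.reverse_reverse]
    exact (hgood a ha).2

end Cuts

section WellLinked

variable {ℬ : Set (Set V)}

theorem exists_disjoint_of_ncard_lt [Finite V] {ι : Type*} {X : Set ι} {F : ι → Set V}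
    (hF : X.PairwiseDisjoint F) {S : Set V} (hS : S.ncard < X.ncard) :
    ∃ x ∈ X, Disjoint (F x) S := by
  by_contra! hmeet
  simp only [Set.not_disjoint_iff] at hmeet
  obtain ⟨x₀, hx₀⟩ := Set.nonempty_of_ncard_ne_zero (Nat.ne_zero_of_lt hS)
  have : Nonempty V := ⟨(hmeet x₀ hx₀).choose⟩
  choose! f hfF hfS using hmeet
  have hinj : X.InjOn f := fun x hx y hy hxy =>
    hF.elim_set hx hy (f x) (hfF x hx) (hxy ▸ hfF y hy)
  exact hS.not_ge (Set.ncard_le_ncard_of_injOn f hfS hinj S.toFinite)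

theorem IsBramble.wellLinked [Finite V] (hℬ : D.IsBramble ℬ) {A : Set V} {I O : V → Set V}
    (hI : A.PairwiseDisjoint I) (hO : A.PairwiseDisjoint O)
    (hIreach : ∀ a ∈ A, ∀ v ∈ I a, D.ReachIn (I a) v a)
    (hOreach : ∀ a ∈ A, ∀ v ∈ O a, D.ReachIn (O a) a v)
    (hIorder : ∀ a ∈ A, A.ncard / 2 ≤ brambleOrder (restrictedBramble ℬ (I a)))
    (hOorder : ∀ a ∈ A, A.ncard / 2 ≤ brambleOrder (restrictedBramble ℬ (O a))) :
    D.WellLinked A := by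
  intro X Y hXA hYA hXY hcard
  refine hasDisjointPaths_of_forall_reachIn_compl fun S hS => ?_
  have hXYA : X.ncard + Y.ncard ≤ A.ncard :=
    (Set.ncard_union_eq hXY).symm.trans_le (Set.ncard_le_ncard (Set.union_subset hXA hYA))
  have hShalf : S.ncard < A.ncard / 2 := by omega
  obtain ⟨x, hx, hxS⟩ := exists_disjoint_of_ncard_lt (hO.subset hXA) hS
  obtain ⟨y, hy, hyS⟩ := exists_disjoint_of_ncard_lt (hI.subset hYA) (hcard ▸ hS)
  obtain ⟨B, ⟨hB, u, huB, huO⟩, hBS⟩ :=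
    exists_mem_restrictedBramble_disjoint (hShalf.trans_le (hOorder x (hXA hx)))
  obtain ⟨B', ⟨hB', v, hvB', hvI⟩, hBS'⟩ :=
    exists_mem_restrictedBramble_disjoint (hShalf.trans_le (hIorder y (hYA hy)))
  have hxu : D.ReachIn Sᶜ x u := (hOreach x (hXA hx) u huO).mono hxS.subset_compl_right
  have huv : D.ReachIn Sᶜ u v := (hℬ.reachIn_union hB hB' huB hvB').mono
    (Set.union_subset hBS.subset_compl_left hBS'.subset_compl_left)
  have hvy : D.ReachIn Sᶜ v y := (hIreach y (hYA hy) v hvI).mono hyS.subset_compl_right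
  exact ⟨x, hx, y, hy, hxu.trans (huv.trans hvy)⟩

theorem IsBramble.exists_wellLinked_of_isPath [Finite V] (hℬ : D.IsBramble ℬ) {P : List V}
    (hP : D.IsPath P) {k : ℕ} (hk : gfun k ≤ brambleOrder (restrictedBramble ℬ {v | v ∈ P})) :
    ∃ A, D.WellLinked A ∧ A.ncard = k ∧ A ⊆ {v | v ∈ P} := by
  classical
  obtain ⟨hnodup, hchain⟩ := hP
  obtain ⟨A, hA, hcut⟩ := exists_cutsInto (Nat.sub_le_iff_le_add.1 hk)
  have hcard : {a | a ∈ A}.ncard = k := by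
    rw [← List.coe_toFinset, Set.ncard_coe_finset,
      List.toFinset_card_of_nodup (hnodup.sublist hcut.sublist), hA]
  obtain ⟨F, hF, hFgood⟩ := hcut.exists_preceding hnodup
  obtain ⟨G, hG, hGgood⟩ := hcut.exists_following hnodup
  refine ⟨{a | a ∈ A}, hℬ.wellLinked hF hG (fun a ha v hv => ?_) (fun a ha v hv => ?_)
    (fun a ha => ?_) (fun a ha => ?_), hcard, hcut.sublist.subset⟩
  · exact reachIn_of_isChain_concat (hchain.infix (hFgood a ha).2) hv
  · exact reachIn_of_isChain_cons (hchain.infix (hGgood a ha).2) hv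
  · rw [hcard]
    exact (hFgood a ha).1.trans
      (brambleOrder_restrictedBramble_mono fun v => List.mem_append_left [a])
  · rw [hcard]
    exact (hGgood a ha).1.trans
      (brambleOrder_restrictedBramble_mono fun v => List.mem_cons_of_mem a)

end WellLinked

section TBramble

variable {T : Set V} {g : ℕ}

theorem empty_notMem_tBramble (hg : 0 < g) : ∅ ∉ D.TBramble T g := by
  rintro ⟨-, h⟩
  rw [Set.empty_inter, Set.ncard_empty] at h
  omega

theorem IsLinked.lt_brambleOrder_tBramble {k r : ℕ} (hT : D.IsLinked T k r) :
    k < brambleOrder (D.TBramble T (r + 1)) := by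
  obtain ⟨Z, hZ, hZcard⟩ := exists_isHittingSet_ncard_eq
    (empty_notMem_tBramble (D := D) (T := T) r.succ_pos)
  rw [← hZcard]
  refine hT Z fun C hC => ?_
  by_contra! hlt
  obtain ⟨v, hvZ, hvC⟩ := hZ C ⟨hC.2.1, hlt⟩
  exact hC.1 hvC hvZ

variable [Finite V]

theorem inter_nonempty_of_ncard_lt {B C : Set V} (hC : C ⊆ T)
    (hT : T.ncard < C.ncard + (B ∩ T).ncard) : (C ∩ B).Nonempty := by
  rw [← Set.not_disjoint_iff_nonempty_inter]
  intro hCB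
  rw [← Set.ncard_union_eq (hCB.mono_right Set.inter_subset_left)] at hT
  exact hT.not_ge (Set.ncard_le_ncard (Set.union_subset hC Set.inter_subset_right))

theorem isBramble_tBramble (hT : T.ncard < 2 * g) : D.IsBramble (D.TBramble T g) := by
  refine ⟨fun B hB => hB.1, fun B ⟨_, hB⟩ B' ⟨_, hB'⟩ => Or.inl ?_⟩
  have hmeet : (B ∩ T ∩ B').Nonempty :=
    inter_nonempty_of_ncard_lt Set.inter_subset_right (by omega)
  exact hmeet.mono (Set.inter_subset_inter_left B' Set.inter_subset_left)

theorem brambleOrder_tBramble_le (hg : 0 < g) :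
    brambleOrder (D.TBramble T g) ≤ T.ncard + 1 - g := by
  rcases lt_or_ge T.ncard g with hTg | hgT
  · have hempty : IsHittingSet (D.TBramble T g) ∅ := fun B hB =>
      absurd (hB.2.trans (Set.ncard_le_ncard Set.inter_subset_right)) hTg.not_ge
    exact (brambleOrder_le_ncard hempty).trans (by simp)
  obtain ⟨C, hCT, hC⟩ := Set.exists_subset_card_eq (s := T) (n := T.ncard + 1 - g) (by omega)
  rw [← hC]
  exact brambleOrder_le_ncard fun B ⟨_, hB⟩ => inter_nonempty_of_ncard_lt hCT (by omega)

end TBramble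

theorem gfun_pos {k : ℕ} (hk : 1 ≤ k) : 0 < gfun k :=
  Nat.sub_pos_of_lt (Nat.one_lt_mul_iff.2 (by omega))

end Dgraph

open Dgraph in
/-- with `g(k) = (k+1)(⌊k/2⌋+1) - 1`, if `T` is a `(g(k)-1, g(k)-1)`-linked
set of size `2g(k) - 1` in the finite digraph `D`, then `D` contains a bramble `ℬ` of
order `g(k)`, a directed path `P` whose vertex set is a hitting set of `ℬ`, and a
well-linked set `A` of order `k` with `A ⊆ V(P)`. -/
theorem stmt14 {V : Type} [Finite V] (D : Dgraph V) (k : ℕ) (hk : 1 ≤ k) (T : Set V)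
    (hT : T.ncard = 2 * gfun k - 1)
    (hlinked : D.IsLinked T (gfun k - 1) (gfun k - 1)) :
    ∃ (ℬ : Set (Set V)) (P : List V) (A : Set V),
      D.IsBramble ℬ ∧ brambleOrder ℬ = gfun k ∧
      D.IsPath P ∧ IsHittingSet ℬ {v | v ∈ P} ∧
      D.WellLinked A ∧ A.ncard = k ∧ A ⊆ {v | v ∈ P} := by
  have hpos : 0 < gfun k := gfun_pos hk
  have hℬ : D.IsBramble (D.TBramble T (gfun k)) := isBramble_tBramble (by omega)
  have hge : gfun k ≤ brambleOrder (D.TBramble T (gfun k)) := by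
    have := hlinked.lt_brambleOrder_tBramble
    rw [Nat.sub_add_cancel hpos] at this
    omega
  have hle : brambleOrder (D.TBramble T (gfun k)) ≤ gfun k :=
    (brambleOrder_tBramble_le hpos).trans (by omega)
  obtain ⟨P, hP, hPhit⟩ := hℬ.exists_isPath_isHittingSet (empty_notMem_tBramble hpos)
  obtain ⟨A, hA, hAcard, hAP⟩ :=
    hℬ.exists_wellLinked_of_isPath hP (hPhit.restrictedBramble_eq.symm ▸ hge)
  exact ⟨_, P, A, hℬ, hle.antisymm hge, hP, hPhit, hA, hAcard, hAP⟩
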